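/- Let Q be a nonempty finite set, μ a probability distribution on Q, C a positive integer, and E a complex inner product space. Let f : Q^C → E, let M := E_{q∼μ^C}[f(q)], and for i ∈ {1,…,C} and q_i ∈ Q let M_{i,q_i} be the expectation of f(q) over q ∼ μ^C conditioned on coordinate i equaling q_i. Then E_{q∼μ^C}[ ‖ f(q) − ∑_{i=1}^C (M_{i,q_i} − M) ‖² ] = E_{q∼μ^C}[‖f(q)‖²] − ∑_{i=1}^C E_{q_i∼μ}[‖M − M_{i,q_i}‖²]. -/

import Mathlib

/-! Write `M` for the mean of `f` and `g i a := M_{i,a} - M`. Each `g i` has mean zero, so the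
functions `q ↦ g i (q i)` of independent coordinates are pairwise orthogonal, and their sum `S` has
`i`-th conditional mean `g i`. Hence every conditional mean of `f - S` is the constant `M`, which
makes `f - S` orthogonal to `S`; the identity is then Pythagoras for `f = (f - S) + S`, combined
with `𝔼‖S‖² = ∑ i, 𝔼‖g i‖²`. -/

section WeightedMean

variable {α R V W : Type*} [Fintype α] [CommSemiring R] [AddCommMonoid V] [Module R V]
  [AddCommMonoid W] [Module R W]

/-- The expectation `f ↦ ∑ a, w a • f a` of vector-valued functions on a finite type with respect
to the weights `w`, as a linear map. It is an average only when the weights sum to `1`. -/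
def weightedMean (w : α → R) : (α → V) →ₗ[R] V :=
  ∑ a, w a • LinearMap.proj a

theorem weightedMean_apply (w : α → R) (f : α → V) : weightedMean w f = ∑ a, w a • f a := by
  simp [weightedMean]

theorem weightedMean_const {w : α → R} (hw : ∑ a, w a = 1) (c : V) :
    weightedMean w (fun _ => c) = c := by
  rw [weightedMean_apply, ← Finset.sum_smul, hw, one_smul]

theorem map_weightedMean (L : V →ₗ[R] W) (w : α → R) (f : α → V) :
    L (weightedMean w f) = weightedMean w (fun a => L (f a)) := by
  simp only [weightedMean_apply, map_sum, map_smul]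

theorem weightedMean_sum {κ : Type*} [Fintype κ] (w : α → R) (f : κ → α → V) :
    weightedMean w (fun a => ∑ k, f k a) = ∑ k, weightedMean w (f k) := by
  rw [← map_sum, Finset.sum_fn]

end WeightedMean

section InnerProduct

variable {α E : Type*} [Fintype α] [NormedAddCommGroup E] [InnerProductSpace ℝ E]

theorem weightedMean_inner_left (w : α → ℝ) (f : α → E) (c : E) :
    weightedMean w (fun a => inner ℝ (f a) c) = inner ℝ (weightedMean w f) c :=
  (map_weightedMean ((innerₗ E).flip c) w f).symm

theorem weightedMean_inner_right (w : α → ℝ) (c : E) (f : α → E) :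
    weightedMean w (fun a => inner ℝ c (f a)) = inner ℝ c (weightedMean w f) :=
  (map_weightedMean (innerₗ E c) w f).symm

theorem weightedMean_norm_add_sq_of_orthogonal {w : α → ℝ} {f g : α → E}
    (hfg : weightedMean w (fun a => inner ℝ (f a) (g a)) = 0) :
    weightedMean w (fun a => ‖f a + g a‖ ^ 2) =
      weightedMean w (fun a => ‖f a‖ ^ 2) + weightedMean w (fun a => ‖g a‖ ^ 2) := by
  have expand : (fun a => ‖f a + g a‖ ^ 2) =
      (fun a => ‖f a‖ ^ 2) + (2 : ℝ) • (fun a => inner ℝ (f a) (g a)) + fun a => ‖g a‖ ^ 2 :=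
    funext fun a => norm_add_sq_real (f a) (g a)
  rw [expand, map_add, map_add, map_smul, hfg, smul_zero, add_zero]

end InnerProduct

section ProductWeight

variable {ι R V : Type*} {Q : ι → Type*} [Fintype ι] [CommSemiring R] {w : ∀ i, Q i → R}

/-- The product of the weights `w i` on the factors `Q i`, that is, the mass function of the product
distribution `⨂ i, w i`, under which the coordinates are independent. -/
def productWeight (w : ∀ i, Q i → R) (q : ∀ i, Q i) : R :=
  ∏ i, w i (q i)

variable [DecidableEq ι]

theorem mul_productWeight_update (w : ∀ i, Q i → R) (q : ∀ i, Q i) (i : ι) (a : Q i) :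
    w i (q i) * productWeight w (Function.update q i a) = w i a * productWeight w q := by
  have off_i : ∏ j ∈ {i}ᶜ, w j (Function.update q i a j) = ∏ j ∈ {i}ᶜ, w j (q j) :=
    Finset.prod_congr rfl fun j hj => by
      rw [Function.update_of_ne (by simpa using hj)]
  rw [productWeight, productWeight, Fintype.prod_eq_mul_prod_compl i,
    Fintype.prod_eq_mul_prod_compl i (fun j => w j (q j)), off_i, Function.update_self,
    mul_left_comm]

variable [∀ i, Fintype (Q i)]

theorem sum_productWeight_eq_one (hw : ∀ i, ∑ a, w i a = 1) : ∑ q, productWeight w q = 1 := by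
  simp only [productWeight, ← Fintype.prod_sum, hw, Finset.prod_const_one]

variable [AddCommMonoid V] [Module R V]

/-- The conditional mean `M_{i,a}` of a function on `∀ i, Q i` given that coordinate `i` equals `a`,
for factors of total weight `1`. By independence, conditioning amounts to overwriting coordinate `i`
by `a`, which also makes sense when `w i a = 0`. -/
def condMean (w : ∀ i, Q i → R) (i : ι) (a : Q i) : ((∀ i, Q i) → V) →ₗ[R] V :=
  weightedMean (productWeight w) ∘ₗ LinearMap.funLeft R V (fun q => Function.update q i a)

theorem condMean_apply (w : ∀ i, Q i → R) (i : ι) (a : Q i) (f : (∀ i, Q i) → V) :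
    condMean w i a f = weightedMean (productWeight w) (fun q => f (Function.update q i a)) :=
  rfl

theorem weightedMean_condMean {i : ι} (hw : ∑ a, w i a = 1) (f : (∀ i, Q i) → V) :
    weightedMean (w i) (fun a => condMean w i a f) = weightedMean (productWeight w) f := by
  -- Exchanging a fresh sample `a` with the coordinate `q i` preserves the weight of `(a, q)`.
  have swap_involutive : Function.Involutive
      fun p : Q i × (∀ i, Q i) => (p.2 i, Function.update p.2 i p.1) := fun p => by simp
  calc weightedMean (w i) (fun a => condMean w i a f)
      = ∑ p : Q i × (∀ i, Q i),
          (w i p.1 * productWeight w p.2) • f (Function.update p.2 i p.1) := by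
        simp only [condMean_apply, weightedMean_apply, Finset.smul_sum, smul_smul,
          Fintype.sum_prod_type]
    _ = ∑ p : Q i × (∀ i, Q i), (w i p.1 * productWeight w p.2) • f p.2 :=
        Fintype.sum_equiv swap_involutive.toPerm _ _ fun p => by
          simp only [Function.Involutive.coe_toPerm, mul_productWeight_update]
    _ = weightedMean (productWeight w) f := by
        simp only [Fintype.sum_prod_type_right, ← Finset.sum_smul, ← Finset.sum_mul, hw, one_mul,
          weightedMean_apply]

theorem weightedMean_eval (hw : ∀ i, ∑ a, w i a = 1) (i : ι) (g : Q i → V) :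
    weightedMean (productWeight w) (fun q => g (q i)) = weightedMean (w i) g := by
  rw [← weightedMean_condMean (hw i)]
  simp only [condMean_apply, Function.update_self,
    weightedMean_const (sum_productWeight_eq_one hw)]

theorem condMean_sum_eval (hw : ∀ i, ∑ a, w i a = 1) {g : ∀ i, Q i → V}
    (hg : ∀ i, weightedMean (w i) (g i) = 0) (i : ι) (a : Q i) :
    condMean w i a (fun q => ∑ k, g k (q k)) = g i a := by
  rw [condMean_apply, weightedMean_sum, Fintype.sum_eq_single i]
  · simp only [Function.update_self, weightedMean_const (sum_productWeight_eq_one hw)]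
  · intro k hk
    simp only [Function.update_of_ne hk, weightedMean_eval hw, hg]

end ProductWeight

section Orthogonality

variable {ι E : Type*} {Q : ι → Type*} [Fintype ι] [DecidableEq ι] [∀ i, Fintype (Q i)]
  [NormedAddCommGroup E] [InnerProductSpace ℝ E] {w : ∀ i, Q i → ℝ}

theorem weightedMean_inner_sum_eval (hw : ∀ i, ∑ a, w i a = 1) (f : (∀ i, Q i) → E)
    (g : ∀ i, Q i → E) :
    weightedMean (productWeight w) (fun q => inner ℝ (f q) (∑ i, g i (q i))) =
      ∑ i, weightedMean (w i) (fun a => inner ℝ (condMean w i a f) (g i a)) := by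
  simp only [inner_sum, weightedMean_sum]
  refine Fintype.sum_congr _ _ fun i => ?_
  rw [← weightedMean_condMean (hw i)]
  simp only [condMean_apply, Function.update_self, weightedMean_inner_left]

theorem weightedMean_inner_sum_eval_eq_zero (hw : ∀ i, ∑ a, w i a = 1) {f : (∀ i, Q i) → E}
    {c : E} (hf : ∀ i a, condMean w i a f = c) {g : ∀ i, Q i → E}
    (hg : ∀ i, weightedMean (w i) (g i) = 0) :
    weightedMean (productWeight w) (fun q => inner ℝ (f q) (∑ i, g i (q i))) = 0 := by
  simp only [weightedMean_inner_sum_eval hw, hf, weightedMean_inner_right, hg, inner_zero_right,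
    Finset.sum_const_zero]

theorem weightedMean_norm_sum_eval_sq (hw : ∀ i, ∑ a, w i a = 1) {g : ∀ i, Q i → E}
    (hg : ∀ i, weightedMean (w i) (g i) = 0) :
    weightedMean (productWeight w) (fun q => ‖∑ i, g i (q i)‖ ^ 2) =
      ∑ i, weightedMean (w i) (fun a => ‖g i a‖ ^ 2) := by
  simp only [← real_inner_self_eq_norm_sq, weightedMean_inner_sum_eval hw, condMean_sum_eval hw hg]

theorem claimA1_decomposition_general (hw : ∀ i, ∑ a, w i a = 1) (f : (∀ i, Q i) → E) :
    let M := weightedMean (productWeight w) f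
    weightedMean (productWeight w) (fun q => ‖f q - ∑ i, (condMean w i (q i) f - M)‖ ^ 2) =
      weightedMean (productWeight w) (fun q => ‖f q‖ ^ 2) -
        ∑ i, weightedMean (w i) (fun a => ‖M - condMean w i a f‖ ^ 2) := by
  intro M
  let g (i : ι) (a : Q i) : E := condMean w i a f - M
  let S (q : ∀ i, Q i) : E := ∑ i, g i (q i)
  have mean_g (i : ι) : weightedMean (w i) (g i) = 0 := by
    change weightedMean (w i) ((fun a => condMean w i a f) - fun _ => M) = 0
    rw [map_sub, weightedMean_condMean (hw i), weightedMean_const (hw i), sub_self]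
  have condMean_residual (i : ι) (a : Q i) : condMean w i a (f - S) = M := by
    rw [map_sub, condMean_sum_eval hw mean_g, sub_sub_cancel]
  have pythagoras := weightedMean_norm_add_sq_of_orthogonal
    (weightedMean_inner_sum_eval_eq_zero hw condMean_residual mean_g)
  simp only [Pi.sub_apply, S, sub_add_cancel, weightedMean_norm_sum_eval_sq hw mean_g]
    at pythagoras
  simp only [norm_sub_rev M]
  exact eq_sub_of_add_eq pythagoras.symm

end Orthogonality

/-- The orthogonal-decomposition identity in the proof of Claim A.1:
`E_q‖f(q) − ∑_i (M_{i,q_i} − M)‖² = E_q‖f(q)‖² − ∑_i E_{q_i}‖M − M_{i,q_i}‖²`. -/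
theorem claimA1_decomposition {Q : Type*} [Fintype Q] [Nonempty Q] [DecidableEq Q]
    (w : Q → ℝ) (hw : ∀ q, 0 ≤ w q) (hw1 : ∑ q, w q = 1)
    (C : ℕ) (hC : 0 < C)
    {E : Type*} [NormedAddCommGroup E] [InnerProductSpace ℂ E]
    (f : (Fin C → Q) → E) :
    let M := ∑ q : Fin C → Q, (∏ i, w (q i)) • f q
    let Mi := fun (i : Fin C) (qi : Q) =>
      ∑ q : Fin C → Q, (∏ j, w (q j)) • f (Function.update q i qi)
    ∑ q : Fin C → Q, (∏ i, w (q i)) * ‖f q - ∑ i : Fin C, (Mi i (q i) - M)‖ ^ 2 =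
      ∑ q : Fin C → Q, (∏ i, w (q i)) * ‖f q‖ ^ 2
        - ∑ i : Fin C, ∑ qi : Q, w qi * ‖M - Mi i qi‖ ^ 2 := by
  let : InnerProductSpace ℝ E := InnerProductSpace.complexToReal
  simpa only [weightedMean_apply, condMean_apply, productWeight, smul_eq_mul] using
    claimA1_decomposition_general (fun _ : Fin C => hw1) f
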